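/- arXiv:1210.5603 — 5 statements merged into one kernel-verified Lean document; each statement's English description precedes it below -/
import Mathlib

section
/- Let V be a topological space and let W ⊆ V be a nonempty subset. Let A ⊆ V be a Boolean combination of open subsets of V, i.e. a finite union of locally closed sets (sets of the form U ∩ F with U open in V and F closed in V), and let B = V \ A. Then either W ∩ A or W ∩ B has nonempty interior with respect to the subspace topology on W. -/
/-!
A locally closed set `L = U ∩ F` is decided on a smaller nonempty open subset of any nonempty
open `O`: one of `O`, `O ∩ U ∩ Fᶜ`, `O ∩ U` is nonempty and is either disjoint from `L` or contained
in it (`IsLocallyClosed.exists_isOpen_decides`). For a finite union, shrink the open set once for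
each piece: either some step lands inside a piece, hence inside the union, or the last open set
misses all of them (`exists_isOpen_decides_iUnion`). The theorem is this applied to the
subspace `W`, starting from the whole space.
-/

theorem IsLocallyClosed.exists_isOpen_decides {X : Type*} [TopologicalSpace X] {L O : Set X}
    (hL : IsLocallyClosed L) (hO : IsOpen O) (hne : O.Nonempty) :
    ∃ O' ⊆ O, IsOpen O' ∧ O'.Nonempty ∧ (O' ⊆ L ∨ O' ⊆ Lᶜ) := by
  obtain ⟨U, F, hU, hF, rfl⟩ := hL
  by_cases hOU : (O ∩ U).Nonempty
  · by_cases hOUF : (O ∩ U ∩ Fᶜ).Nonempty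
    · exact ⟨O ∩ U ∩ Fᶜ, fun x hx => hx.1.1, (hO.inter hU).inter hF.isOpen_compl, hOUF,
        Or.inr fun x hx hxL => hx.2 hxL.2⟩
    · refine ⟨O ∩ U, fun x hx => hx.1, hO.inter hU, hOU, Or.inl fun x hx => ⟨hx.2, ?_⟩⟩
      by_contra hxF
      exact hOUF ⟨x, hx, hxF⟩
  · exact ⟨O, subset_rfl, hO, hne, Or.inr fun x hx hxL => hOU ⟨x, hx, hxL.1⟩⟩

theorem exists_isOpen_decides_iUnion {X : Type*} [TopologicalSpace X] (n : ℕ)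
    (f : Fin n → Set X) (hf : ∀ i, IsLocallyClosed (f i)) {O : Set X} (hO : IsOpen O)
    (hne : O.Nonempty) :
    ∃ O' ⊆ O, IsOpen O' ∧ O'.Nonempty ∧ (O' ⊆ ⋃ i, f i ∨ O' ⊆ (⋃ i, f i)ᶜ) := by
  induction n generalizing O with
  | zero => exact ⟨O, subset_rfl, hO, hne, Or.inr (by simp)⟩
  | succ n ih =>
    obtain ⟨P, hPO, hP, hPne, hPf | hPf⟩ := (hf 0).exists_isOpen_decides hO hne
    · exact ⟨P, hPO, hP, hPne, Or.inl (hPf.trans (Set.subset_iUnion f 0))⟩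
    · obtain ⟨Q, hQP, hQ, hQne, hQf | hQf⟩ := ih (fun i => f i.succ) (fun i => hf i.succ) hP hPne
      · exact ⟨Q, hQP.trans hPO, hQ, hQne,
          Or.inl (hQf.trans (Set.iUnion_subset fun i => Set.subset_iUnion f i.succ))⟩
      · refine ⟨Q, hQP.trans hPO, hQ, hQne, Or.inr fun x hx hxf => ?_⟩
        obtain ⟨i, hi⟩ := Set.mem_iUnion.1 hxf
        induction i using Fin.cases with
        | zero => exact hPf (hQP hx) hi
        | succ j => exact hQf hx (Set.mem_iUnion.2 ⟨j, hi⟩)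

/-- Robinson. Let `V` be a topological space and `W ⊆ V` a nonempty
subset. Let `A ⊆ V` be a Boolean combination of open subsets of `V`, i.e. a finite union
of locally closed sets, and let `B = V \ A`. Then either `W ∩ A` or `W ∩ B` has nonempty
interior with respect to the subspace topology on `W`. -/
theorem stmt_0 {V : Type*} [TopologicalSpace V] {W : Set V} (hW : W.Nonempty)
    {A : Set V}
    (hA : ∃ (n : ℕ) (f : Fin n → Set V),
      (∀ i, IsLocallyClosed (f i)) ∧ A = ⋃ i, f i) :
    (interior ((↑) ⁻¹' A : Set W)).Nonempty ∨
      (interior ((↑) ⁻¹' Aᶜ : Set W)).Nonempty := by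
  obtain ⟨n, f, hf, rfl⟩ := hA
  have : Nonempty W := hW.to_subtype
  obtain ⟨O, -, hO, hne, h⟩ := exists_isOpen_decides_iUnion n (fun i => ((↑) ⁻¹' f i : Set W))
    (fun i => (hf i).preimage continuous_subtype_val) isOpen_univ Set.univ_nonempty
  rw [← Set.preimage_iUnion] at h
  exact h.imp (fun h => hne.mono (interior_maximal h hO)) fun h => hne.mono (interior_maximal h hO)
end

section
/- Let C be a connected T1 topological space and let a ≠ b be points of C. Suppose C \ {a} = A₁ ∪ A₂ where A₁, A₂ are disjoint nonempty open subsets with b ∈ A₁, and C \ {b} = B₁ ∪ B₂ where B₁, B₂ are disjoint nonempty open subsets with a ∈ B₁. Then: (1) A₂ ⊆ B₁ and B₂ ⊆ A₁; (2) A₁ ∩ B₁ is nonempty and frontier(A₁ ∩ B₁) = {a, b}; (3) every open set containing a or containing b meets A₁ ∩ B₁; (4) C is the pairwise disjoint union C = A₂ ∪ {a} ∪ (A₁ ∩ B₁) ∪ {b} ∪ B₂. -/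
/-!
Everything follows from connectedness of `C`: an open set with open complement is empty or
everything.

* `A₂ ∩ B₂` is open and its complement is `A₁ ∪ B₁` (because `a ∈ B₁` and `b ∈ A₁`), which is open
  and nonempty. Hence `A₂ ∩ B₂ = ∅`, which gives the inclusions and the decomposition of `C`.
* If an open `U ∋ a` missed `A₁ ∩ B₁`, then `U ∩ B₁` would be an open neighbourhood of `a` missing
  `A₁`, so `A₁ᶜ = A₂ ∪ (U ∩ B₁)` would be open and `A₁` a proper nonempty clopen set. The case of
  `b` is symmetric (`cut_meets`). So `a` and `b` lie in the closure of `A₁ ∩ B₁`.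
* Outside `A₁ ∩ B₁` and `{a, b}` there is only the open set `A₂ ∪ B₂`, so the frontier contains
  no further points.
-/

/-- In a connected space, two disjoint open sets covering the space cannot both be nonempty. -/
lemma open_cover_false {C : Type*} [TopologicalSpace C] [ConnectedSpace C] {S T : Set C}
    (hS : IsOpen S) (hT : IsOpen T) (hcover : ∀ x, x ∈ S ∨ x ∈ T) (hdisj : ∀ x ∈ S, x ∉ T)
    {x y : C} (hx : x ∈ S) (hy : y ∈ T) : False := by
  obtain ⟨z, -, hzS, hzT⟩ := isPreconnected_univ S T hS hT (fun z _ => hcover z)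
    ⟨x, trivial, hx⟩ ⟨y, trivial, hy⟩
  exact hdisj z hzS hzT

/-- The cut point `a` is a limit of the side `A₁`, even inside any open neighbourhood `V` of `a`:
otherwise `A₂ ∪ V'`, with `V' = U ∩ V`, would be an open complement of `A₁`. -/
lemma cut_meets {C : Type*} [TopologicalSpace C] [ConnectedSpace C] {a b : C} {A₁ A₂ U V : Set C}
    (hA₁ : IsOpen A₁) (hA₂ : IsOpen A₂) (hdisj : ∀ x ∈ A₁, x ∉ A₂)
    (hmem : ∀ x, x ∈ A₁ ∨ x ∈ A₂ ↔ x ≠ a) (hb : b ∈ A₁)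
    (hU : IsOpen U) (hV : IsOpen V) (haU : a ∈ U) (haV : a ∈ V) :
    (U ∩ (A₁ ∩ V)).Nonempty := by
  by_contra hne
  have hmiss : ∀ x ∈ U, x ∈ A₁ → x ∉ V := fun x hxU hxA hxV => hne ⟨x, hxU, hxA, hxV⟩
  refine open_cover_false hA₁ (hA₂.union (hU.inter hV)) (fun x => ?_) (fun x hx => ?_) hb
    (Or.inr ⟨haU, haV⟩)
  · by_cases hxa : x = a
    · subst hxa
      exact Or.inr (Or.inr ⟨haU, haV⟩)
    · rcases (hmem x).2 hxa with h | h
      · exact Or.inl h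
      · exact Or.inr (Or.inl h)
  · rintro (h | ⟨hxU, hxV⟩)
    · exact hdisj x hx h
    · exact hmiss x hxU hx hxV

/-- Let `C` be a connected T1 topological space and `a ≠ b` points of `C`.
Suppose `C \ {a} = A₁ ∪ A₂` with `A₁, A₂` disjoint nonempty open sets, `b ∈ A₁`, and
`C \ {b} = B₁ ∪ B₂` with `B₁, B₂` disjoint nonempty open sets, `a ∈ B₁`. Then:
(1) `A₂ ⊆ B₁` and `B₂ ⊆ A₁`;
(2) `A₁ ∩ B₁` is nonempty and `frontier (A₁ ∩ B₁) = {a, b}`;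
(3) every open set containing `a` or containing `b` meets `A₁ ∩ B₁`;
(4) `C` is the pairwise disjoint union `A₂ ∪ {a} ∪ (A₁ ∩ B₁) ∪ {b} ∪ B₂`. -/
theorem stmt_3 {C : Type*} [TopologicalSpace C] [ConnectedSpace C] [T1Space C]
    {a b : C} (hab : a ≠ b)
    {A₁ A₂ B₁ B₂ : Set C}
    (hA₁open : IsOpen A₁) (hA₂open : IsOpen A₂)
    (hA₁ne : A₁.Nonempty) (hA₂ne : A₂.Nonempty)
    (hAdisj : Disjoint A₁ A₂)
    (hAunion : A₁ ∪ A₂ = ({a}ᶜ : Set C))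
    (hbA₁ : b ∈ A₁)
    (hB₁open : IsOpen B₁) (hB₂open : IsOpen B₂)
    (hB₁ne : B₁.Nonempty) (hB₂ne : B₂.Nonempty)
    (hBdisj : Disjoint B₁ B₂)
    (hBunion : B₁ ∪ B₂ = ({b}ᶜ : Set C))
    (haB₁ : a ∈ B₁) :
    (A₂ ⊆ B₁ ∧ B₂ ⊆ A₁) ∧
    ((A₁ ∩ B₁).Nonempty ∧ frontier (A₁ ∩ B₁) = {a, b}) ∧
    (∀ U : Set C, IsOpen U → (a ∈ U ∨ b ∈ U) → (U ∩ (A₁ ∩ B₁)).Nonempty) ∧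
    (A₂ ∪ {a} ∪ (A₁ ∩ B₁) ∪ {b} ∪ B₂ = Set.univ ∧
      List.Pairwise Disjoint [A₂, {a}, A₁ ∩ B₁, {b}, B₂]) := by
  have hA : ∀ x, x ∈ A₁ ∨ x ∈ A₂ ↔ x ≠ a := fun x => by
    simpa using Set.ext_iff.1 hAunion x
  have hB : ∀ x, x ∈ B₁ ∨ x ∈ B₂ ↔ x ≠ b := fun x => by
    simpa using Set.ext_iff.1 hBunion x
  have hAd : ∀ x ∈ A₁, x ∉ A₂ := fun x h h' => Set.disjoint_left.1 hAdisj h h'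
  have hBd : ∀ x ∈ B₁, x ∉ B₂ := fun x h h' => Set.disjoint_left.1 hBdisj h h'
  have hAB : ∀ x ∈ A₂, x ∉ B₂ := by
    intro x hxA hxB
    refine open_cover_false (hA₂open.inter hB₂open) (hA₁open.union hB₁open) (fun y => ?_)
      (fun y hy => ?_) ⟨hxA, hxB⟩ (Or.inl hbA₁)
    · simp only [Set.mem_inter_iff, Set.mem_union]
      grind
    · simp only [Set.mem_inter_iff, Set.mem_union] at hy ⊢
      grind
  have hmeet : ∀ U : Set C, IsOpen U → (a ∈ U ∨ b ∈ U) → (U ∩ (A₁ ∩ B₁)).Nonempty := by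
    rintro U hU (h | h)
    · exact cut_meets hA₁open hA₂open hAd hA hbA₁ hU hB₁open h haB₁
    · rw [Set.inter_comm A₁]
      exact cut_meets hB₁open hB₂open hBd hB haB₁ hU hA₁open h hbA₁
  refine ⟨⟨fun x hx => by grind, fun x hx => by grind⟩, ⟨?_, ?_⟩, hmeet, ?_, ?_⟩
  · exact (hmeet Set.univ isOpen_univ (Or.inl trivial)).mono Set.inter_subset_right
  · rw [(hA₁open.inter hB₁open).frontier_eq]
    ext x
    simp only [Set.mem_sdiff, Set.mem_inter_iff, Set.mem_insert_iff, Set.mem_singleton_iff]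
    constructor
    · rintro ⟨hcl, hnot⟩
      by_contra hx
      -- Such an `x` lies in the open set `A₂ ∪ B₂`, which misses `A₁ ∩ B₁`.
      have hx2 : x ∈ A₂ ∪ B₂ := by
        simp only [Set.mem_union]
        grind
      obtain ⟨y, hy, hy1, hy2⟩ := mem_closure_iff.1 hcl _ (hA₂open.union hB₂open) hx2
      exact hy.elim (hAd y hy1) (hBd y hy2)
    · intro hx
      refine ⟨mem_closure_iff.2 fun U hU hxU => hmeet U hU ?_, by grind⟩
      rcases hx with rfl | rfl
      · exact Or.inl hxU
      · exact Or.inr hxU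
  · ext x
    simp only [Set.mem_union, Set.mem_inter_iff, Set.mem_singleton_iff, Set.mem_univ, iff_true]
    grind
  · simp only [List.pairwise_cons, List.mem_cons, List.not_mem_nil, or_false, forall_eq_or_imp,
      forall_eq, Set.disjoint_left, Set.mem_inter_iff, Set.mem_singleton_iff]
    grind
end

section
/- Let M be a connected Hausdorff topological space with at least two points. Let B be a basis for the topology of M and let K ≥ 1 be a natural number such that every basis set U ∈ B has finite frontier with at most K elements. Let X ⊆ M be a subset with X ≠ ∅ and X ≠ M whose frontier is finite with exactly n elements. Suppose X = Y₁ ∪ … ∪ Y_N where the sets Y₁, …, Y_N are pairwise disjoint, nonempty, preconnected, and each Yᵢ is clopen in the subspace topology on X. Then N ≤ n · K. -/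
/-!
Since `Yᵢ` is clopen in `X`, its frontier is contained in that of `X`; as `M` is connected and
`Yᵢ` is neither empty nor all of `M`, that frontier contains some point `pᵢ`. It remains to see
that a point `p` lies in the closure of at most `K` of the `Yᵢ` (`card_le_of_mem_closure`). If
`p ∈ X`, only the `Yᵢ` containing `p` qualifies, because `Yᵢ` is closed in `X`. Otherwise pick a
point in each `Yᵢ` and a basic neighbourhood `U` of `p` that avoids these finitely many points:
every preconnected `Yᵢ` with `p` in its closure meets both `U` and its complement, hence meets the
frontier of `U`, which has at most `K` points, and the `Yᵢ` are disjoint.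
-/

open Set

lemma closure_inter_subset_of_isClosed_preimage {M : Type*} [TopologicalSpace M] {X Y : Set M}
    (hYX : Y ⊆ X) (h : IsClosed ((↑) ⁻¹' Y : Set X)) : closure Y ∩ X ⊆ Y := by
  obtain ⟨C, hC, hCY⟩ := isClosed_induced_iff.1 h
  rintro x ⟨hx, hxX⟩
  have hYC : Y ⊆ C := fun y hy => by
    have : (⟨y, hYX hy⟩ : X) ∈ ((↑) ⁻¹' C : Set X) := by rw [hCY]; exact hy
    exact this
  have : (⟨x, hxX⟩ : X) ∈ ((↑) ⁻¹' Y : Set X) := by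
    rw [← hCY]; exact closure_minimal hYC hC hx
  exact this

lemma frontier_subset_of_isClopen_preimage {M : Type*} [TopologicalSpace M] {X Y : Set M}
    (hYX : Y ⊆ X) (h : IsClopen ((↑) ⁻¹' Y : Set X)) : frontier Y ⊆ frontier X := by
  rintro x ⟨hx, hxi⟩
  refine ⟨closure_mono hYX hx, fun hxX => hxi ?_⟩
  have hxY : x ∈ Y :=
    closure_inter_subset_of_isClosed_preimage hYX h.1 ⟨hx, interior_subset hxX⟩
  obtain ⟨O, hO, hOY⟩ := isOpen_induced_iff.1 h.2
  have key : ∀ y (hy : y ∈ X), y ∈ O ↔ y ∈ Y := fun y hy =>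
    Set.ext_iff.1 hOY ⟨y, hy⟩
  exact mem_interior.2 ⟨O ∩ interior X, fun y hy => (key y (interior_subset hy.2)).1 hy.1,
    hO.inter isOpen_interior, (key x (hYX hxY)).2 hxY, hxX⟩

/-- At most `K` of the pieces have `p` in their closure: only one if `p` lies in their union, and
otherwise each such piece contains one of the at most `K` frontier points of a small basic
neighbourhood of `p`. -/
lemma card_le_of_mem_closure {M : Type*} [TopologicalSpace M] [T1Space M]
    {B : Set (Set M)} (hB : TopologicalSpace.IsTopologicalBasis B)
    {K : ℕ} (hK : 1 ≤ K)
    (hBfin : ∀ U ∈ B, (frontier U).Finite ∧ (frontier U).ncard ≤ K)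
    {ι : Type*} [Finite ι] {Y : ι → Set M}
    (hYdisj : Pairwise (Function.onFun Disjoint Y))
    (hYne : ∀ i, (Y i).Nonempty)
    (hYconn : ∀ i, IsPreconnected (Y i))
    (hYcl : ∀ i, closure (Y i) ∩ (⋃ j, Y j) ⊆ Y i)
    (p : M) (s : Finset ι) (hs : ∀ i ∈ s, p ∈ closure (Y i)) : s.card ≤ K := by
  have heq : ∀ {i j x}, x ∈ Y i → x ∈ Y j → i = j := fun {i j x} hi hj => by
    by_contra hij
    exact Set.disjoint_left.1 (hYdisj hij) hi hj
  by_cases hp : p ∈ ⋃ j, Y j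
  · refine le_trans (Finset.card_le_one.2 fun i hi j hj => ?_) hK
    exact heq (hYcl i ⟨hs i hi, hp⟩) (hYcl j ⟨hs j hj, hp⟩)
  · choose y hy using hYne
    have hpy : p ∈ (range y)ᶜ := by
      rintro ⟨i, rfl⟩
      exact hp (mem_iUnion.2 ⟨i, hy i⟩)
    obtain ⟨U, hUB, hpU, hUy⟩ := hB.exists_subset_of_mem_open hpy
      (finite_range y).isClosed.isOpen_compl
    have hmeet : ∀ i ∈ s, ∃ x, x ∈ Y i ∧ x ∈ frontier U := by
      intro i hi
      obtain ⟨z, hzU, hzY⟩ := mem_closure_iff.1 (hs i hi) U (hB.isOpen hUB) hpU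
      by_contra! hno
      have hout : ∀ x ∈ Y i, x ∉ U → x ∈ (closure U)ᶜ := fun x hx hxU hxc =>
        hno x hx ⟨hxc, fun h => hxU (interior_subset h)⟩
      obtain ⟨x, -, hxU, hxc⟩ := hYconn i U (closure U)ᶜ (hB.isOpen hUB)
        isClosed_closure.isOpen_compl (fun x hx => or_iff_not_imp_left.2 (hout x hx))
        ⟨z, hzY, hzU⟩ ⟨y i, hy i, hout _ (hy i) fun h => hUy h (mem_range_self i)⟩
      exact hxc (subset_closure hxU)
    have : Nonempty M := ⟨p⟩
    choose! f hfY hfU using hmeet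
    obtain ⟨hfin, hcard⟩ := hBfin U hUB
    refine le_trans ?_ hcard
    rw [← Set.ncard_coe_finset]
    refine Set.ncard_le_ncard_of_injOn f hfU (fun i hi j hj hij => ?_) hfin
    exact heq (hfY i hi) (hij ▸ hfY j hj)

/-- Let `M` be a connected Hausdorff topological space with at least two
points. Let `B` be a basis for the topology of `M` and `K ≥ 1` a natural number such that
every basis set `U ∈ B` has finite frontier with at most `K` elements. Let `X ⊆ M` be a
subset with `X ≠ ∅` and `X ≠ M` whose frontier is finite with exactly `n` elements.
Suppose `X = Y₁ ∪ … ∪ Y_N` where the `Yᵢ` are pairwise disjoint, nonempty, preconnected,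
and each `Yᵢ` is clopen in the subspace topology on `X`. Then `N ≤ n * K`. -/
theorem stmt_5 {M : Type*} [TopologicalSpace M] [ConnectedSpace M] [T2Space M]
    [Nontrivial M]
    {B : Set (Set M)} (hB : TopologicalSpace.IsTopologicalBasis B)
    {K : ℕ} (hK : 1 ≤ K)
    (hBfin : ∀ U ∈ B, (frontier U).Finite ∧ (frontier U).ncard ≤ K)
    {X : Set M} (hXne : X ≠ ∅) (hXuniv : X ≠ Set.univ)
    {n : ℕ} (hXfr : (frontier X).Finite) (hXfrcard : (frontier X).ncard = n)
    {N : ℕ} {Y : Fin N → Set M}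
    (hYunion : X = ⋃ i, Y i)
    (hYdisj : Pairwise (Function.onFun Disjoint Y))
    (hYne : ∀ i, (Y i).Nonempty)
    (hYconn : ∀ i, IsPreconnected (Y i))
    (hYclopen : ∀ i, IsClopen ((↑) ⁻¹' (Y i) : Set X)) :
    N ≤ n * K := by
  have hYX : ∀ i, Y i ⊆ X := fun i => hYunion ▸ subset_iUnion Y i
  have hfr : ∀ i, (frontier (Y i)).Nonempty := fun i =>
    nonempty_frontier_iff.2 ⟨hYne i, fun h => hXuniv (univ_subset_iff.1 (h ▸ hYX i))⟩
  choose p hp using hfr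
  classical
  have hmaps : ∀ i ∈ (Finset.univ : Finset (Fin N)), p i ∈ hXfr.toFinset := fun i _ =>
    hXfr.mem_toFinset.2 (frontier_subset_of_isClopen_preimage (hYX i) (hYclopen i) (hp i))
  have hle := Finset.card_le_mul_card_image_of_maps_to hmaps K fun q _ =>
    card_le_of_mem_closure hB hK hBfin hYdisj hYne hYconn
      (fun i => hYunion ▸ closure_inter_subset_of_isClosed_preimage (hYX i) (hYclopen i).1) q _
      (fun i hi => (Finset.mem_filter.1 hi).2 ▸ frontier_subset_closure (hp i))
  rwa [Finset.card_univ, Fintype.card_fin, ← Set.ncard_eq_toFinset_card _ hXfr, hXfrcard,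
    mul_comm] at hle
end

section
/- Let C be a connected T1 topological space and let x ≠ y be points of C. Suppose C \ {x} = X₁ ∪ X₂ where X₁, X₂ are disjoint nonempty open subsets with y ∈ X₁, and C \ {y} = Y₁ ∪ Y₂ where Y₁, Y₂ are disjoint nonempty open subsets with x ∈ Y₁. Write I(x, y) = X₁ ∩ Y₁ for the interval between x and y. Let a, b ∈ C \ {x, y} with a ∉ I(x, y) and b ∉ I(x, y). Then a and b lie in the same piece of the partition {X₁, X₂} of C \ {x} if and only if a and b lie in the same piece of the partition {Y₁, Y₂} of C \ {y}. (In particular: if a and b are on the same side of x and both lie outside the interval I(x, y), they are on the same side of y; and if they are on different sides of x, they are on different sides of y.) -/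
/-!
The far pieces `X₂` and `Y₂` are disjoint: `X₂ ∩ Y₂` is open, its complement is `X₁ ∪ Y₁`
(which contains `y` and `x`), also open, and it misses `x`, so connectedness makes it empty.
Hence a point other than `x`, `y` and outside `X₁ ∩ Y₁` lies in `X₁ ∩ Y₂` or in `X₂ ∩ Y₁`,
so its piece with respect to `x` determines its piece with respect to `y`, and conversely.
-/

/-- Let `C` be a connected T1 topological space and `x ≠ y` points of
`C`. Suppose `C \ {x} = X₁ ∪ X₂` with `X₁, X₂` disjoint nonempty open, `y ∈ X₁`, and
`C \ {y} = Y₁ ∪ Y₂` with `Y₁, Y₂` disjoint nonempty open, `x ∈ Y₁`. Write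
`I(x, y) = X₁ ∩ Y₁`. Let `a, b ∈ C \ {x, y}` with `a ∉ I(x, y)` and `b ∉ I(x, y)`.
Then `a` and `b` lie in the same piece of the partition `{X₁, X₂}` of `C \ {x}` iff
they lie in the same piece of the partition `{Y₁, Y₂}` of `C \ {y}`. -/
theorem stmt_9 {C : Type*} [TopologicalSpace C] [ConnectedSpace C] [T1Space C]
    {x y : C} (hxy : x ≠ y)
    {X₁ X₂ Y₁ Y₂ : Set C}
    (hX₁open : IsOpen X₁) (hX₂open : IsOpen X₂)
    (hX₁ne : X₁.Nonempty) (hX₂ne : X₂.Nonempty)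
    (hXdisj : Disjoint X₁ X₂)
    (hXunion : X₁ ∪ X₂ = ({x}ᶜ : Set C))
    (hyX₁ : y ∈ X₁)
    (hY₁open : IsOpen Y₁) (hY₂open : IsOpen Y₂)
    (hY₁ne : Y₁.Nonempty) (hY₂ne : Y₂.Nonempty)
    (hYdisj : Disjoint Y₁ Y₂)
    (hYunion : Y₁ ∪ Y₂ = ({y}ᶜ : Set C))
    (hxY₁ : x ∈ Y₁)
    {a b : C} (hax : a ≠ x) (hay : a ≠ y) (hbx : b ≠ x) (hby : b ≠ y)
    (haI : a ∉ X₁ ∩ Y₁) (hbI : b ∉ X₁ ∩ Y₁) :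
    ((a ∈ X₁ ∧ b ∈ X₁) ∨ (a ∈ X₂ ∧ b ∈ X₂)) ↔
      ((a ∈ Y₁ ∧ b ∈ Y₁) ∨ (a ∈ Y₂ ∧ b ∈ Y₂)) := by
  have hX : ∀ z, (z ∈ X₁ ∨ z ∈ X₂) ↔ z ≠ x := fun z => by
    simpa using Set.ext_iff.mp hXunion z
  have hY : ∀ z, (z ∈ Y₁ ∨ z ∈ Y₂) ↔ z ≠ y := fun z => by
    simpa using Set.ext_iff.mp hYunion z
  have hXd : ∀ z, z ∈ X₁ → z ∉ X₂ := fun _ h => Set.disjoint_left.mp hXdisj h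
  have hYd : ∀ z, z ∈ Y₁ → z ∉ Y₂ := fun _ h => Set.disjoint_left.mp hYdisj h
  have hcompl : (X₂ ∩ Y₂)ᶜ = X₁ ∪ Y₁ := by
    ext z
    simp only [Set.mem_compl_iff, Set.mem_inter_iff, Set.mem_union]
    have h₁ := hX z
    have h₂ := hY z
    have h₃ := hXd z
    have h₄ := hYd z
    grind
  have hclopen : IsClopen (X₂ ∩ Y₂) :=
    ⟨isOpen_compl_iff.mp (hcompl ▸ hX₁open.union hY₁open), hX₂open.inter hY₂open⟩
  have hempty : ∀ z, ¬(z ∈ X₂ ∧ z ∈ Y₂) := by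
    rcases isClopen_iff.mp hclopen with h | h
    · exact fun z hz => (h ▸ hz : z ∈ (∅ : Set C))
    · have hx : x ∈ X₂ ∩ Y₂ := h ▸ Set.mem_univ x
      exact absurd rfl ((hX x).mp (Or.inr hx.1))
  have key : ∀ z, z ≠ x → z ≠ y → z ∉ X₁ ∩ Y₁ →
      (z ∈ X₁ ∧ z ∉ X₂ ∧ z ∉ Y₁ ∧ z ∈ Y₂) ∨ (z ∉ X₁ ∧ z ∈ X₂ ∧ z ∈ Y₁ ∧ z ∉ Y₂) := by
    intro z hzx hzy hzI
    have h₁ := (hX z).mpr hzx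
    have h₂ := (hY z).mpr hzy
    have h₃ := hXd z
    have h₄ := hYd z
    have h₅ := hempty z
    have h₆ : ¬(z ∈ X₁ ∧ z ∈ Y₁) := hzI
    tauto
  have ha := key a hax hay haI
  have hb := key b hbx hby hbI
  tauto
end

section
/- Let C be a connected T1 topological space and let a, b, c, d be four distinct points of C. Suppose: C \ {a} = A₁ ∪ A₂ with A₁, A₂ disjoint nonempty open sets and b, c, d ∈ A₁; C \ {b} = B₁ ∪ B₂ with B₁, B₂ disjoint nonempty open sets and a, c, d ∈ B₁; C \ {c} = C₁ ∪ C₂ with C₁, C₂ disjoint nonempty open sets, a ∈ C₁ and b, d ∈ C₂; and C \ {d} = D₁ ∪ D₂ with D₁, D₂ disjoint nonempty open sets, a, c ∈ D₁ and b ∈ D₂. Then the interval between c and d is contained in the interval between a and b: C₂ ∩ D₁ ⊆ A₁ ∩ B₁. -/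
/-! Two cut points that lie in each other's near pieces have disjoint far pieces
(`far_pieces_disjoint`). For the pair `a, c` this says that `A₂` misses `C₂`, and for the pair
`b, d` that `B₂` misses `D₁`. A point of `C₂ ∩ D₁` is neither `a` nor `b`, so it lies in `A₁`
and in `B₁`. -/

/-- If `p` and `q` are cut points, with `q` in the piece `P₁` at `p` and `p` in the piece `Q₁`
at `q`, then the far pieces `P₂` and `Q₂` are disjoint: the complement of `P₂ ∩ Q₂` is the open
set `P₁ ∪ Q₁`, so `P₂ ∩ Q₂` is clopen, and it omits `p`. -/
theorem far_pieces_disjoint {X : Type*} [TopologicalSpace X] [PreconnectedSpace X] {p q : X}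
    {P₁ P₂ Q₁ Q₂ : Set X}
    (hP₁ : IsOpen P₁) (hP₂ : IsOpen P₂) (hP : Disjoint P₁ P₂) (hPu : P₁ ∪ P₂ = {p}ᶜ)
    (hQ₁ : IsOpen Q₁) (hQ₂ : IsOpen Q₂) (hQ : Disjoint Q₁ Q₂) (hQu : Q₁ ∪ Q₂ = {q}ᶜ)
    (hq : q ∈ P₁) (hp : p ∈ Q₁) : Disjoint P₂ Q₂ := by
  have hcompl : (P₂ ∩ Q₂)ᶜ = P₁ ∪ Q₁ := by
    ext x
    have h1 := Set.ext_iff.1 hPu x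
    have h2 := Set.ext_iff.1 hQu x
    have h3 := @Set.disjoint_left.1 hP x
    have h4 := @Set.disjoint_left.1 hQ x
    simp only [Set.mem_union, Set.mem_compl_iff, Set.mem_singleton_iff, Set.mem_inter_iff] at *
    grind
  have hclopen : IsClopen (P₂ ∩ Q₂) :=
    ⟨⟨hcompl ▸ hP₁.union hQ₁⟩, hP₂.inter hQ₂⟩
  rcases isClopen_iff.1 hclopen with h | h
  · exact Set.disjoint_iff_inter_eq_empty.2 h
  · have hpm : p ∈ P₂ ∩ Q₂ := h ▸ Set.mem_univ p
    exact absurd hpm.2 (Set.disjoint_left.1 hQ hp)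

/-- Let `C` be a connected T1 topological space and `a, b, c, d` four
distinct points of `C`. Suppose: `C \ {a} = A₁ ∪ A₂` with `A₁, A₂` disjoint nonempty
open and `b, c, d ∈ A₁`; `C \ {b} = B₁ ∪ B₂` with `B₁, B₂` disjoint nonempty open and
`a, c, d ∈ B₁`; `C \ {c} = C₁ ∪ C₂` with `C₁, C₂` disjoint nonempty open, `a ∈ C₁` and
`b, d ∈ C₂`; `C \ {d} = D₁ ∪ D₂` with `D₁, D₂` disjoint nonempty open, `a, c ∈ D₁` and
`b ∈ D₂`. Then the interval between `c` and `d` is contained in the interval between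
`a` and `b`: `C₂ ∩ D₁ ⊆ A₁ ∩ B₁`. -/
theorem stmt_10 {C : Type*} [TopologicalSpace C] [ConnectedSpace C] [T1Space C]
    {a b c d : C}
    (hab : a ≠ b) (hac : a ≠ c) (had : a ≠ d) (hbc : b ≠ c) (hbd : b ≠ d) (hcd : c ≠ d)
    {A₁ A₂ B₁ B₂ C₁ C₂ D₁ D₂ : Set C}
    (hA₁open : IsOpen A₁) (hA₂open : IsOpen A₂)
    (hA₁ne : A₁.Nonempty) (hA₂ne : A₂.Nonempty)
    (hAdisj : Disjoint A₁ A₂) (hAunion : A₁ ∪ A₂ = ({a}ᶜ : Set C))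
    (hbA₁ : b ∈ A₁) (hcA₁ : c ∈ A₁) (hdA₁ : d ∈ A₁)
    (hB₁open : IsOpen B₁) (hB₂open : IsOpen B₂)
    (hB₁ne : B₁.Nonempty) (hB₂ne : B₂.Nonempty)
    (hBdisj : Disjoint B₁ B₂) (hBunion : B₁ ∪ B₂ = ({b}ᶜ : Set C))
    (haB₁ : a ∈ B₁) (hcB₁ : c ∈ B₁) (hdB₁ : d ∈ B₁)
    (hC₁open : IsOpen C₁) (hC₂open : IsOpen C₂)
    (hC₁ne : C₁.Nonempty) (hC₂ne : C₂.Nonempty)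
    (hCdisj : Disjoint C₁ C₂) (hCunion : C₁ ∪ C₂ = ({c}ᶜ : Set C))
    (haC₁ : a ∈ C₁) (hbC₂ : b ∈ C₂) (hdC₂ : d ∈ C₂)
    (hD₁open : IsOpen D₁) (hD₂open : IsOpen D₂)
    (hD₁ne : D₁.Nonempty) (hD₂ne : D₂.Nonempty)
    (hDdisj : Disjoint D₁ D₂) (hDunion : D₁ ∪ D₂ = ({d}ᶜ : Set C))
    (haD₁ : a ∈ D₁) (hcD₁ : c ∈ D₁) (hbD₂ : b ∈ D₂) :
    C₂ ∩ D₁ ⊆ A₁ ∩ B₁ := by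
  rintro x ⟨hxC, hxD⟩
  have hAC := far_pieces_disjoint hA₁open hA₂open hAdisj hAunion
    hC₁open hC₂open hCdisj hCunion hcA₁ haC₁
  -- From `b`, the point `d` separates in the opposite direction, so `D₁` is the far piece at `d`.
  have hBD := far_pieces_disjoint hB₁open hB₂open hBdisj hBunion
    hD₂open hD₁open hDdisj.symm (Set.union_comm D₁ D₂ ▸ hDunion) hdB₁ hbD₂
  have hxa : x ≠ a := by
    rintro rfl
    exact Set.disjoint_left.1 hCdisj haC₁ hxC
  have hxb : x ≠ b := by
    rintro rfl
    exact Set.disjoint_left.1 hDdisj hxD hbD₂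
  have hxA : x ∈ A₁ ∪ A₂ := hAunion ▸ hxa
  have hxB : x ∈ B₁ ∪ B₂ := hBunion ▸ hxb
  exact ⟨hxA.resolve_right fun h => Set.disjoint_left.1 hAC h hxC,
    hxB.resolve_right fun h => Set.disjoint_left.1 hBD h hxD⟩
end
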